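/- Let B be the BlindOracle strategy and let H_B be a colored eviction graph of its run satisfying: any two edges of the same color have the same source vertex; for any two edges (i,j), (i,j') of the same color the evictions of σ(j) and σ(j') do not overlap; and the number of colors is at most OPT. Then the number of edges of H_B satisfies |E(H_B)| ≤ 3η/k + 2·OPT. -/

import Mathlib

namespace Caching

attribute [local instance low] Classical.propDecidable

/-- A run of a feasible eviction strategy on the request sequence `σ` with cache size `k`
and time horizon `T`.  `C t` is the cache after processing request `t` (with `C 0 = ∅`),
and `p t` is the page evicted at time `t` (meaningful at full-cache misses). -/
structure CacheRun (S : Type) [DecidableEq S] (k T : ℕ) (σ : ℕ → S) where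
  C : ℕ → Finset S
  p : ℕ → S
  init : C 0 = ∅
  card_le : ∀ t, (C t).card ≤ k
  hit : ∀ t, 1 ≤ t → t ≤ T → (σ t ∈ C (t - 1) ∨ (C (t - 1)).card < k) →
      C t = insert (σ t) (C (t - 1))
  evict_mem : ∀ t, 1 ≤ t → t ≤ T → σ t ∉ C (t - 1) → (C (t - 1)).card = k →
      p t ∈ C (t - 1)
  evict : ∀ t, 1 ≤ t → t ≤ T → σ t ∉ C (t - 1) → (C (t - 1)).card = k →
      C t = insert (σ t) ((C (t - 1)).erase (p t))

variable {S : Type} [DecidableEq S]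

/- `nextReq σ T t` is `ν(t)`: the first time `s > t` (with `s ≤ T`) at which the page
`σ t` is requested again, and `T + 1` if there is no such time. -/
open Classical in
noncomputable def nextReq (σ : ℕ → S) (T t : ℕ) : ℕ :=
  if h : ∃ s, t < s ∧ s ≤ T ∧ σ s = σ t then Nat.find h else T + 1

/-- The total prediction loss `η = Σ_{t=1}^T |ν(t) - ω(t)|`. -/
noncomputable def totalLoss (σ : ℕ → S) (T : ℕ) (ω : ℕ → ℕ) : ℕ :=
  ∑ t ∈ Finset.Icc 1 T, Nat.dist (nextReq σ T t) (ω t)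

/-- `I_Q(t)`: indices of the last requests (up to time `t`) of the currently cached pages. -/
noncomputable def lastIdx {k T : ℕ} {σ : ℕ → S} (R : CacheRun S k T σ) (t : ℕ) : Finset ℕ :=
  (Finset.Icc 1 t).filter fun i => σ i ∈ R.C t ∧ ∀ j ∈ Finset.Icc (i + 1) t, σ j ≠ σ i

/-- Time `t` is a full-cache miss (an eviction step). -/
def EvictStep {k T : ℕ} {σ : ℕ → S} (R : CacheRun S k T σ) (t : ℕ) : Prop :=
  1 ≤ t ∧ t ≤ T ∧ σ t ∉ R.C (t - 1) ∧ (R.C (t - 1)).card = k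

/-- At time `t` the run evicts the page whose last-request index is `i`. -/
def EvictsIdx {k T : ℕ} {σ : ℕ → S} (R : CacheRun S k T σ) (t i : ℕ) : Prop :=
  EvictStep R t ∧ i ∈ lastIdx R (t - 1) ∧ R.p t = σ i

/-- `OBJ_Q`: the number of cache misses of the run. -/
noncomputable def misses {k T : ℕ} {σ : ℕ → S} (R : CacheRun S k T σ) : ℕ :=
  ((Finset.Icc 1 T).filter fun t => σ t ∉ R.C (t - 1)).card

/-- Belady's algorithm: on a full-cache miss always evict the cached page with the
largest next-request time. -/
def IsBelady {k T : ℕ} {σ : ℕ → S} (A : CacheRun S k T σ) : Prop :=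
  ∀ t, EvictStep A t → ∀ i ∈ lastIdx A (t - 1), A.p t = σ i →
    ∀ j ∈ lastIdx A (t - 1), nextReq σ T j ≤ nextReq σ T i

/-- BlindOracle: on a full-cache miss always evict the cached page with the largest
predicted next-request time. -/
def IsBlindOracle {k T : ℕ} {σ : ℕ → S} (B : CacheRun S k T σ) (ω : ℕ → ℕ) : Prop :=
  ∀ t, EvictStep B t → ∀ i ∈ lastIdx B (t - 1), B.p t = σ i →
    ∀ j ∈ lastIdx B (t - 1), ω j ≤ ω i

/-- An eviction graph of a run: a directed graph on `{1,…,T}` whose every edge `(i, j)`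
corresponds to a distinct time (`time e`) at which the run made a mistake by evicting
page `σ j` while `i` was a strictly better eviction candidate in the cache. -/
structure EvictionGraph {k T : ℕ} {σ : ℕ → S} (R : CacheRun S k T σ) where
  E : Finset (ℕ × ℕ)
  time : ℕ × ℕ → ℕ
  time_inj : ∀ e ∈ E, ∀ e' ∈ E, time e = time e' → e = e'
  mistake : ∀ e ∈ E, EvictsIdx R (time e) e.2 ∧ e.1 ∈ lastIdx R (time e - 1) ∧
      nextReq σ T e.2 < nextReq σ T e.1

/-- The eviction at time `t` triggers the eviction at time `t'`: the page evicted
at `t` is next requested at `t' = ν(i)`, which is again an eviction step. -/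
def Triggers {k T : ℕ} {σ : ℕ → S} (R : CacheRun S k T σ) (t t' : ℕ) : Prop :=
  ∃ i, EvictsIdx R t i ∧ t' = nextReq σ T i ∧ ∃ j, EvictsIdx R t' j

/-- The eviction of the page with last-request index `i` triggers the eviction of the
page with last-request index `j` (at time `ν(i)`). -/
def TriggersIdx {k T : ℕ} {σ : ℕ → S} (R : CacheRun S k T σ) (i j : ℕ) : Prop :=
  (∃ t, EvictsIdx R t i) ∧ EvictsIdx R (nextReq σ T i) j

/-- The page requested at time `t` was never requested before. -/
def NewPage (σ : ℕ → S) (t : ℕ) : Prop := ∀ s, 1 ≤ s → s < t → σ s ≠ σ t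

/-- At time `t` the evicted page has the largest prediction among cached pages. -/
def BlindChoiceAt {k T : ℕ} {σ : ℕ → S} (R : CacheRun S k T σ) (ω : ℕ → ℕ) (t : ℕ) : Prop :=
  ∀ i ∈ lastIdx R (t - 1), R.p t = σ i → ∀ j ∈ lastIdx R (t - 1), ω j ≤ ω i

/-- Corrector's choice at time `t`: if some cached page has a provably wrong prediction
(`ω i < t`), evict such a page with minimal prediction; otherwise act as BlindOracle. -/
def CorrectorChoiceAt {k T : ℕ} {σ : ℕ → S} (R : CacheRun S k T σ) (ω : ℕ → ℕ) (t : ℕ) :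
    Prop :=
  ((∃ i ∈ lastIdx R (t - 1), ω i < t) →
    ∀ i ∈ lastIdx R (t - 1), R.p t = σ i →
      ω i < t ∧ ∀ j ∈ lastIdx R (t - 1), ω j < t → ω i ≤ ω j) ∧
  ((¬ ∃ i ∈ lastIdx R (t - 1), ω i < t) → BlindChoiceAt R ω t)

/-- The page requested at time `t` was last evicted (before `t`) at a step labeled with
strategy `s₀` (0 = BlindOracle, 1 = RandomAlg, 2 = Corrector). -/
def LastEvictedWith {k T : ℕ} {σ : ℕ → S} (R : CacheRun S k T σ) (strat : ℕ → Fin 3)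
    (t : ℕ) (s₀ : Fin 3) : Prop :=
  ∃ t₀, t₀ < t ∧ EvictStep R t₀ ∧ R.p t₀ = σ t ∧ strat t₀ = s₀ ∧
    ∀ t₁, t₀ < t₁ → t₁ < t → ¬(EvictStep R t₁ ∧ R.p t₁ = σ t)

/-- A run of the AlternatingOracle strategy (for a fixed realization of its random
choices), together with the labeling `strat` of which of the three strategies was used
at each eviction step: on a miss for a never-requested page use BlindOracle; if the
requested page was last evicted by BlindOracle use RandomAlg (an arbitrary cached page);
if by RandomAlg use Corrector; if by Corrector use BlindOracle. -/
def IsAlternatingOracle {k T : ℕ} {σ : ℕ → S} (R : CacheRun S k T σ) (ω : ℕ → ℕ)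
    (strat : ℕ → Fin 3) : Prop :=
  ∀ t, EvictStep R t →
    (NewPage σ t → strat t = 0 ∧ BlindChoiceAt R ω t) ∧
    (LastEvictedWith R strat t 0 → strat t = 1) ∧
    (LastEvictedWith R strat t 1 → strat t = 2 ∧ CorrectorChoiceAt R ω t) ∧
    (LastEvictedWith R strat t 2 → strat t = 0 ∧ BlindChoiceAt R ω t)

/-- AlternatingOracle driven by a seed `u` of uniform random values: at each eviction
step performed by RandomAlg at time `t`, the evicted page is the one whose last-request
index has rank `u t` among the `k` cached indices, so that for a uniformly random seed
the evicted page is uniform over the cache. -/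
def IsAlternatingOracleSeeded {k T : ℕ} {σ : ℕ → S} (R : CacheRun S k T σ) (ω : ℕ → ℕ)
    (strat : ℕ → Fin 3) (u : Fin (T + 1) → Fin k) : Prop :=
  IsAlternatingOracle R ω strat ∧
  ∀ t (h : EvictStep R t), strat t = 1 →
    ∀ i ∈ lastIdx R (t - 1), R.p t = σ i →
      ((lastIdx R (t - 1)).filter fun j => j < i).card =
        ((u ⟨t, Nat.lt_succ_of_le h.2.1⟩ : Fin k) : ℕ)

/-- The family of runs is adapted to the seeds: the behavior up to time `t` depends only
on the seed values with index at most `t` (the strategy is online). -/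
def Adapted {k T : ℕ} {σ : ℕ → S} (R : (Fin (T + 1) → Fin k) → CacheRun S k T σ)
    (strat : (Fin (T + 1) → Fin k) → ℕ → Fin 3) : Prop :=
  ∀ u u' t, (∀ s : Fin (T + 1), (s : ℕ) ≤ t → u s = u' s) →
    (R u).C t = (R u').C t ∧ (R u).p t = (R u').p t ∧ strat u t = strat u' t

/-- The probability of the outcome `x` for `T` i.i.d. Bernoulli(γ) random bits. -/
noncomputable def bernWeight (γ : ℝ) {T : ℕ} (x : Fin T → Bool) : ℝ :=
  ∏ i, if x i then γ else 1 - γ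

/-- `S(x, m)`: the number of ones among the first `m` coordinates of `x`. -/
noncomputable def scount {T : ℕ} (x : Fin T → Bool) (m : ℕ) : ℕ :=
  (Finset.univ.filter fun i : Fin T => (i : ℕ) < m ∧ x i).card

/-- Last request index (up to time `τ`) of page `p`, `0` if none. -/
def lst (σ : ℕ → S) : ℕ → S → ℕ
  | 0, _ => 0
  | (n + 1), p => if σ (n + 1) = p then n + 1 else lst σ n p

lemma lst_le (σ : ℕ → S) (τ : ℕ) (p : S) : lst σ τ p ≤ τ := by
  induction τ with
  | zero => simp [lst]
  | succ n ih => simp only [lst]; split_ifs <;> omega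

lemma lst_page (σ : ℕ → S) (τ : ℕ) (p : S) (h : 1 ≤ lst σ τ p) : σ (lst σ τ p) = p := by
  induction τ with
  | zero => simp [lst] at h
  | succ n ih =>
    simp only [lst] at h ⊢
    split_ifs at h ⊢ with h1
    · exact h1
    · exact ih h

lemma lst_after (σ : ℕ → S) (τ : ℕ) (p : S) (j : ℕ) (h1 : lst σ τ p < j) (h2 : j ≤ τ) :
    σ j ≠ p := by
  induction τ with
  | zero => omega
  | succ n ih =>
    simp only [lst] at h1
    split_ifs at h1 with h3
    · omega
    · rcases Nat.lt_or_ge n j with h | h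
      · have : j = n + 1 := by omega
        rw [this]; exact h3
      · exact ih h1 h

lemma lst_unique (σ : ℕ → S) (τ i : ℕ) (h0 : 1 ≤ i) (h1 : i ≤ τ)
    (h2 : ∀ j, i < j → j ≤ τ → σ j ≠ σ i) : lst σ τ (σ i) = i := by
  have ha : i ≤ lst σ τ (σ i) := by
    by_contra hc
    exact lst_after σ τ (σ i) i (by omega) h1 rfl
  by_contra hne
  have hp := lst_page σ τ (σ i) (by omega)
  exact h2 _ (by omega) (lst_le σ τ _) hp

lemma lst_succ_ne (σ : ℕ → S) (τ : ℕ) (p : S) (h : p ≠ σ (τ + 1)) :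
    lst σ (τ + 1) p = lst σ τ p := by
  simp only [lst]
  rw [if_neg (fun h' => h h'.symm)]

lemma nu_gt (σ : ℕ → S) (T i : ℕ) (hi : i ≤ T) : i < nextReq σ T i := by
  unfold nextReq
  split_ifs with h
  · exact (Nat.find_spec h).1
  · omega

lemma nu_le (σ : ℕ → S) (T i : ℕ) : nextReq σ T i ≤ T + 1 := by
  unfold nextReq
  split_ifs with h
  · have := (Nat.find_spec h).2.1
    omega
  · omega

lemma nu_page (σ : ℕ → S) (T i : ℕ) (h : nextReq σ T i ≤ T) : σ (nextReq σ T i) = σ i := by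
  unfold nextReq at h ⊢
  split_ifs at h ⊢ with h1
  · exact (Nat.find_spec h1).2.2
  · omega

lemma nu_between (σ : ℕ → S) (T i j : ℕ) (h1 : i < j) (h2 : j < nextReq σ T i) :
    σ j ≠ σ i := by
  intro hc
  have h3 := nu_le σ T i
  unfold nextReq at h2
  split_ifs at h2 with h
  · have h4 := (Nat.find_spec h).2.1
    exact Nat.find_min h h2 ⟨h1, by omega, hc⟩
  · exact h ⟨j, h1, by omega, hc⟩

lemma lst_of_nu (σ : ℕ → S) (T τ i : ℕ) (h0 : 1 ≤ i) (h1 : i ≤ τ) (h2 : τ < nextReq σ T i) :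
    lst σ τ (σ i) = i :=
  lst_unique σ τ i h0 h1 (fun j hj hj' => nu_between σ T i j hj (by omega))

lemma nu_of_lst (σ : ℕ → S) (T τ i : ℕ) (hτ : τ ≤ T) (h1 : i = lst σ τ (σ i)) :
    τ < nextReq σ T i := by
  by_contra hc
  have hi : i ≤ τ := by rw [h1]; exact lst_le _ _ _
  have h2 := nu_page σ T i (by omega)
  have h3 := nu_gt σ T i (by omega)
  exact lst_after σ τ (σ i) (nextReq σ T i) (by omega) (by omega) h2

lemma nu_inj (σ : ℕ → S) (T i i' : ℕ) (h0 : 1 ≤ i) (h0' : 1 ≤ i') (hi : i ≤ T) (hi' : i' ≤ T)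
    (h : nextReq σ T i = nextReq σ T i') (hT : nextReq σ T i ≤ T) : i = i' := by
  have a1 := nu_page σ T i hT
  have a2 := nu_page σ T i' (by omega)
  have b1 := nu_gt σ T i hi
  have b2 := nu_gt σ T i' hi'
  have c1 := lst_of_nu σ T (nextReq σ T i - 1) i h0 (by omega) (by omega)
  have c2 := lst_of_nu σ T (nextReq σ T i - 1) i' h0' (by omega) (by omega)
  have : σ i = σ i' := by rw [← a1, ← a2, h]
  rw [← c1, ← c2, this]

section runs
variable {k T : ℕ} {σ : ℕ → S}

lemma run_cases (R : CacheRun S k T σ) (t : ℕ) (h1 : t + 1 ≤ T) :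
    ((σ (t + 1) ∈ R.C t ∨ (R.C t).card < k) ∧ R.C (t + 1) = insert (σ (t + 1)) (R.C t)) ∨
    (σ (t + 1) ∉ R.C t ∧ (R.C t).card = k ∧ R.p (t + 1) ∈ R.C t ∧
      R.C (t + 1) = insert (σ (t + 1)) ((R.C t).erase (R.p (t + 1)))) := by
  by_cases h : σ (t + 1) ∈ R.C t ∨ (R.C t).card < k
  · left
    exact ⟨h, R.hit (t + 1) (by omega) h1 (by simpa using h)⟩
  · right
    push Not at h
    have hc : (R.C t).card = k := le_antisymm (R.card_le t) h.2
    refine ⟨h.1, hc, ?_, ?_⟩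
    · simpa using R.evict_mem (t + 1) (by omega) h1 (by simpa using h.1) (by simpa using hc)
    · simpa using R.evict (t + 1) (by omega) h1 (by simpa using h.1) (by simpa using hc)

lemma run_subset (R : CacheRun S k T σ) (t : ℕ) (h1 : t + 1 ≤ T) :
    R.C (t + 1) ⊆ insert (σ (t + 1)) (R.C t) := by
  rcases run_cases R t h1 with ⟨_, h⟩ | ⟨_, _, _, h⟩
  · rw [h]
  · rw [h]; exact Finset.insert_subset_insert _ (Finset.erase_subset _ _)

lemma run_mem (R : CacheRun S k T σ) (t : ℕ) (h1 : t + 1 ≤ T) : σ (t + 1) ∈ R.C (t + 1) := by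
  rcases run_cases R t h1 with ⟨_, h⟩ | ⟨_, _, _, h⟩ <;> rw [h] <;> simp

lemma run_card_mono (R : CacheRun S k T σ) (t : ℕ) (h1 : t + 1 ≤ T) :
    (R.C t).card ≤ (R.C (t + 1)).card := by
  rcases run_cases R t h1 with ⟨_, h⟩ | ⟨h0, _, h2, h⟩
  · rw [h]; exact Finset.card_le_card (Finset.subset_insert _ _)
  · rw [h, Finset.card_insert_of_notMem (fun hc => h0 (Finset.mem_of_mem_erase hc)),
      Finset.card_erase_add_one h2]

lemma run_card_mono' (R : CacheRun S k T σ) (t t' : ℕ) (h : t ≤ t') (h1 : t' ≤ T) :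
    (R.C t).card ≤ (R.C t').card := by
  induction t', h using Nat.le_induction with
  | base => exact le_rfl
  | succ n hn ih => exact (ih (by omega)).trans (run_card_mono R n h1)

lemma run_seen (R : CacheRun S k T σ) (τ : ℕ) (hτ : τ ≤ T) (p : S) (hp : p ∈ R.C τ) :
    1 ≤ lst σ τ p := by
  induction τ with
  | zero => rw [R.init] at hp; simp at hp
  | succ n ih =>
    simp only [lst]
    split_ifs with h
    · omega
    · have := run_subset R n hτ hp
      rw [Finset.mem_insert] at this
      rcases this with h2 | h2
      · exact absurd h2.symm h
      · exact ih (by omega) h2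

lemma mem_lastIdx (R : CacheRun S k T σ) (τ i : ℕ) :
    i ∈ lastIdx R τ ↔ σ i ∈ R.C τ ∧ i = lst σ τ (σ i) ∧ 1 ≤ i := by
  unfold lastIdx
  simp only [Finset.mem_filter]
  rw [Finset.mem_Icc]
  constructor
  · rintro ⟨⟨h1, h2⟩, h3, h4⟩
    refine ⟨h3, (lst_unique σ τ i h1 h2 ?_).symm, h1⟩
    intro j hj hj'
    exact h4 j (Finset.mem_Icc.2 ⟨by omega, hj'⟩)
  · rintro ⟨h1, h2, h3⟩
    refine ⟨⟨h3, by rw [h2]; exact lst_le _ _ _⟩, h1, ?_⟩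
    intro j hj
    rw [Finset.mem_Icc] at hj
    exact lst_after σ τ (σ i) j (by omega) hj.2

lemma lst_mem_lastIdx (R : CacheRun S k T σ) (τ : ℕ) (hτ : τ ≤ T) (p : S) (hp : p ∈ R.C τ) :
    lst σ τ p ∈ lastIdx R τ := by
  have h1 := run_seen R τ hτ p hp
  have h2 := lst_page σ τ p h1
  rw [mem_lastIdx, h2]
  exact ⟨hp, rfl, h1⟩

lemma card_lastIdx (R : CacheRun S k T σ) (τ : ℕ) (hτ : τ ≤ T) :
    (R.C τ).card ≤ (lastIdx R τ).card := by
  apply Finset.card_le_card_of_injOn (lst σ τ)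
  · intro p hp
    exact lst_mem_lastIdx R τ hτ p hp
  · intro p hp q hq h
    rw [← lst_page σ τ p (run_seen R τ hτ p hp), ← lst_page σ τ q (run_seen R τ hτ q hq), h]

lemma run_not_mem (R : CacheRun S k T σ) (p : S) (t t' : ℕ) (h : t ≤ t') (h1 : t' ≤ T)
    (hp : p ∉ R.C t) (hr : ∀ j, t < j → j ≤ t' → σ j ≠ p) : p ∉ R.C t' := by
  induction t', h using Nat.le_induction with
  | base => exact hp
  | succ n hn ih =>
    intro hc
    have := run_subset R n h1 hc
    rw [Finset.mem_insert] at this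
    rcases this with h2 | h2
    · exact hr (n + 1) (by omega) le_rfl h2.symm
    · exact ih (by omega) (fun j hj hj' => hr j hj (by omega)) h2

lemma both_runs (A B : CacheRun S k T σ) (t : ℕ) (ht : t ≤ T) :
    A.C t = B.C t ∨ ((A.C t).card = k ∧ (B.C t).card = k) := by
  induction t with
  | zero => left; rw [A.init, B.init]
  | succ n ih =>
    have hA := run_card_mono A n ht
    have hB := run_card_mono B n ht
    have hA' := A.card_le (n + 1)
    have hB' := B.card_le (n + 1)
    rcases ih (by omega) with h | ⟨h1, h2⟩
    · by_cases hk : (A.C n).card < k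
      · left
        rcases run_cases A n ht with ⟨_, h3⟩ | ⟨_, h3, _, _⟩
        · rcases run_cases B n ht with ⟨_, h4⟩ | ⟨_, h4, _, _⟩
          · rw [h3, h4, h]
          · rw [h] at hk; omega
        · omega
      · right
        have : (A.C n).card = (B.C n).card := by rw [h]
        omega
    · right; omega

lemma sdiff_card (A B : CacheRun S k T σ) (t : ℕ) (ht : t ≤ T) :
    (A.C t \ B.C t).card = (B.C t \ A.C t).card := by
  apply Finset.card_sdiff_comm
  rcases both_runs A B t ht with h | ⟨h1, h2⟩
  · rw [h]
  · omega

/-- Threshold invariant with a credited set `Cr`. -/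
def Valid (A B : CacheRun S k T σ) (ω : ℕ → ℕ) (τ : ℕ) (Cr : Finset S) : Prop :=
  Cr ⊆ A.C τ \ B.C τ ∧ ∀ θ : ℕ,
    (((A.C τ \ B.C τ) \ Cr).filter fun p => ω (lst σ τ p) ≤ θ).card ≤
      ((B.C τ \ A.C τ).filter fun p => ω (lst σ τ p) ≤ θ).card

def StepRel (A B : CacheRun S k T σ) (τ : ℕ) (Cr Cr' : Finset S) : Prop :=
  (∀ q ∈ Cr, q ∈ A.C (τ + 1) \ B.C (τ + 1) → q ∈ Cr') ∧
  Cr'.card + (if σ (τ + 1) ∈ Cr then 1 else 0) ≤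
    Cr.card + (if σ (τ + 1) ∉ A.C τ ∧ σ (τ + 1) ∈ B.C τ then 1 else 0)

lemma step_miss (A B : CacheRun S k T σ) (ω : ℕ → ℕ) (hB : IsBlindOracle B ω) (τ : ℕ)
    (hτ : τ + 1 ≤ T) (Cr : Finset S) (hV : Valid A B ω τ Cr)
    (h0 : σ (τ + 1) ∉ B.C τ) (h1 : (B.C τ).card = k) (h2 : B.p (τ + 1) ∈ B.C τ)
    (h3 : B.C (τ + 1) = insert (σ (τ + 1)) ((B.C τ).erase (B.p (τ + 1)))) :
    ∃ Cr', Valid A B ω (τ + 1) Cr' ∧ StepRel A B τ Cr Cr' := by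
  have hAsub := run_subset A τ hτ
  have hAm := run_mem A τ hτ
  have hmax : ∀ q ∈ B.C τ, ω (lst σ τ q) ≤ ω (lst σ τ (B.p (τ + 1))) := by
    intro q hq
    refine hB (τ + 1) ⟨by omega, hτ, by simpa using h0, by simpa using h1⟩ _ ?_ ?_ _ ?_
    · simpa using lst_mem_lastIdx B τ (by omega) _ h2
    · exact (lst_page σ τ _ (run_seen B τ (by omega) _ h2)).symm
    · simpa using lst_mem_lastIdx B τ (by omega) _ hq
  have hBm := run_mem B τ hτ
  refine ⟨Cr ∩ (A.C (τ + 1) \ B.C (τ + 1)), ⟨Finset.inter_subset_right, ?_⟩, ?_, ?_⟩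
  · intro θ
    by_cases hθ : ω (lst σ τ (B.p (τ + 1))) ≤ θ
    · have hall : ((B.C (τ + 1) \ A.C (τ + 1)).filter fun p => ω (lst σ (τ + 1) p) ≤ θ) =
          B.C (τ + 1) \ A.C (τ + 1) := by
        apply Finset.filter_true_of_mem
        intro q hq
        rw [Finset.mem_sdiff] at hq
        have hne : q ≠ σ (τ + 1) := fun h => hq.2 (h ▸ hAm)
        rw [lst_succ_ne σ τ q hne]
        have : q ∈ B.C τ := by
          have := hq.1
          rw [h3, Finset.mem_insert] at this
          exact Finset.mem_of_mem_erase (this.resolve_left hne)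
        exact (hmax q this).trans hθ
      rw [hall, ← sdiff_card A B (τ + 1) hτ]
      exact Finset.card_le_card ((Finset.filter_subset _ _).trans Finset.sdiff_subset)
    · refine le_trans (Finset.card_le_card ?_) ((hV.2 θ).trans (Finset.card_le_card ?_))
      · intro q hq
        simp only [Finset.mem_filter, Finset.mem_sdiff, Finset.mem_inter] at hq ⊢
        obtain ⟨⟨⟨a1, a2⟩, a3⟩, a4⟩ := hq
        have hne : q ≠ σ (τ + 1) := fun h => a2 (h ▸ hBm)
        rw [lst_succ_ne σ τ q hne] at a4
        have hqA : q ∈ A.C τ := (Finset.mem_insert.1 (hAsub a1)).resolve_left hne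
        refine ⟨⟨⟨hqA, ?_⟩, fun h => a3 ⟨h, a1, a2⟩⟩, a4⟩
        intro hqB
        apply a2
        rw [h3, Finset.mem_insert, Finset.mem_erase]
        right
        refine ⟨?_, hqB⟩
        rintro rfl
        exact hθ a4
      · intro q hq
        simp only [Finset.mem_filter, Finset.mem_sdiff] at hq ⊢
        obtain ⟨⟨a1, a2⟩, a4⟩ := hq
        have hne : q ≠ σ (τ + 1) := fun h => h0 (h ▸ a1)
        rw [lst_succ_ne σ τ q hne]
        refine ⟨⟨?_, ?_⟩, a4⟩
        · rw [h3, Finset.mem_insert, Finset.mem_erase]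
          right
          refine ⟨?_, a1⟩
          rintro rfl
          exact hθ a4
        · intro h
          exact a2 ((Finset.mem_insert.1 (hAsub h)).resolve_left hne)
  · intro q hq hq'
    exact Finset.mem_inter.2 ⟨hq, hq'⟩
  · refine le_trans ?_ (Nat.le_add_right _ _)
    split_ifs with h
    · apply Finset.card_lt_card
      refine ⟨Finset.inter_subset_left, fun hc => ?_⟩
      have := hc h
      rw [Finset.mem_inter, Finset.mem_sdiff] at this
      exact this.2.2 hBm
    · exact Finset.card_le_card Finset.inter_subset_left

lemma step_hit (A B : CacheRun S k T σ) (ω : ℕ → ℕ) (τ : ℕ)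
    (hτ : τ + 1 ≤ T) (Cr : Finset S) (hV : Valid A B ω τ Cr)
    (h0 : σ (τ + 1) ∈ B.C τ) (h3 : B.C (τ + 1) = B.C τ) :
    ∃ Cr', Valid A B ω (τ + 1) Cr' ∧ StepRel A B τ Cr Cr' := by
  have hAsub := run_subset A τ hτ
  have hAm := run_mem A τ hτ
  have hpCr : σ (τ + 1) ∉ Cr := fun h => (Finset.mem_sdiff.1 (hV.1 h)).2 h0
  -- elements of the new difference
  have hd : ∀ q ∈ A.C (τ + 1) \ B.C (τ + 1), q ≠ σ (τ + 1) ∧ q ∈ A.C τ \ B.C τ := by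
    intro q hq
    rw [h3, Finset.mem_sdiff] at hq
    have hne : q ≠ σ (τ + 1) := fun h => hq.2 (h ▸ h0)
    exact ⟨hne, Finset.mem_sdiff.2
      ⟨(Finset.mem_insert.1 (hAsub hq.1)).resolve_left hne, hq.2⟩⟩
  have hd2 : ∀ q ∈ B.C τ \ A.C τ, q ≠ σ (τ + 1) → q ∈ B.C (τ + 1) \ A.C (τ + 1) := by
    intro q hq hne
    rw [h3, Finset.mem_sdiff]
    rw [Finset.mem_sdiff] at hq
    exact ⟨hq.1, fun h => hq.2 ((Finset.mem_insert.1 (hAsub h)).resolve_left hne)⟩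
  by_cases hpA : σ (τ + 1) ∈ A.C τ
  · refine ⟨Cr ∩ (A.C (τ + 1) \ B.C (τ + 1)), ⟨Finset.inter_subset_right, ?_⟩, ?_, ?_⟩
    · intro θ
      refine le_trans (Finset.card_le_card ?_) ((hV.2 θ).trans (Finset.card_le_card ?_))
      · intro q hq
        rw [Finset.mem_filter, Finset.mem_sdiff, Finset.mem_inter] at hq
        obtain ⟨⟨a1, a2⟩, a3⟩ := hq
        obtain ⟨hne, b1⟩ := hd q a1
        rw [lst_succ_ne σ τ q hne] at a3
        rw [Finset.mem_filter, Finset.mem_sdiff]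
        exact ⟨⟨b1, fun h => a2 ⟨h, a1⟩⟩, a3⟩
      · intro q hq
        rw [Finset.mem_filter] at hq ⊢
        have hne : q ≠ σ (τ + 1) := by
          rintro rfl
          exact (Finset.mem_sdiff.1 hq.1).2 hpA
        rw [lst_succ_ne σ τ q hne]
        exact ⟨hd2 q hq.1 hne, hq.2⟩
    · intro q hq hq'
      exact Finset.mem_inter.2 ⟨hq, hq'⟩
    · rw [if_neg hpCr]
      exact (Finset.card_le_card Finset.inter_subset_left).trans (Nat.le_add_right _ _)
  · by_cases hU : ((A.C τ \ B.C τ) \ Cr).Nonempty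
    · obtain ⟨e0, he0, hmin⟩ := Finset.exists_min_image _ (fun p => ω (lst σ τ p)) hU
      refine ⟨(insert e0 Cr) ∩ (A.C (τ + 1) \ B.C (τ + 1)),
        ⟨Finset.inter_subset_right, ?_⟩, ?_, ?_⟩
      · intro θ
        have hsub : (((A.C (τ + 1) \ B.C (τ + 1)) \
            ((insert e0 Cr) ∩ (A.C (τ + 1) \ B.C (τ + 1)))).filter
              fun p => ω (lst σ (τ + 1) p) ≤ θ) ⊆
            (((A.C τ \ B.C τ) \ Cr).filter fun p => ω (lst σ τ p) ≤ θ).erase e0 := by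
          intro q hq
          rw [Finset.mem_filter, Finset.mem_sdiff, Finset.mem_inter, Finset.mem_insert] at hq
          obtain ⟨⟨a1, a2⟩, a3⟩ := hq
          obtain ⟨hne, b1⟩ := hd q a1
          rw [lst_succ_ne σ τ q hne] at a3
          rw [Finset.mem_erase, Finset.mem_filter, Finset.mem_sdiff]
          exact ⟨fun h => a2 ⟨Or.inl h, a1⟩, ⟨b1, fun h => a2 ⟨Or.inr h, a1⟩⟩, a3⟩
        have hsub2 : ((B.C τ \ A.C τ).filter fun p => ω (lst σ τ p) ≤ θ).erase (σ (τ + 1)) ⊆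
            (B.C (τ + 1) \ A.C (τ + 1)).filter fun p => ω (lst σ (τ + 1) p) ≤ θ := by
          intro q hq
          rw [Finset.mem_erase, Finset.mem_filter] at hq
          rw [Finset.mem_filter, lst_succ_ne σ τ q hq.1]
          exact ⟨hd2 q hq.2.1 hq.1, hq.2.2⟩
        have c1 := Finset.card_le_card hsub
        have c2 := Finset.card_le_card hsub2
        have c3 := hV.2 θ
        have c4 := Finset.pred_card_le_card_erase (a := σ (τ + 1))
          (s := (B.C τ \ A.C τ).filter fun p => ω (lst σ τ p) ≤ θ)
        by_cases hθ : ω (lst σ τ e0) ≤ θ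
        · have := Finset.card_erase_of_mem (Finset.mem_filter.2 ⟨he0, hθ⟩ :
            e0 ∈ (((A.C τ \ B.C τ) \ Cr).filter fun p => ω (lst σ τ p) ≤ θ))
          omega
        · have : (((A.C τ \ B.C τ) \ Cr).filter fun p => ω (lst σ τ p) ≤ θ) = ∅ := by
            apply Finset.filter_false_of_mem
            intro q hq hc
            exact hθ ((hmin q hq).trans hc)
          rw [this] at c1
          simp only [Finset.erase_empty, Finset.card_empty] at c1
          omega
      · intro q hq hq'
        exact Finset.mem_inter.2 ⟨Finset.mem_insert_of_mem hq, hq'⟩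
      · rw [if_neg hpCr, if_pos ⟨hpA, h0⟩]
        exact (Finset.card_le_card Finset.inter_subset_left).trans (Finset.card_insert_le _ _)
    · refine ⟨Cr ∩ (A.C (τ + 1) \ B.C (τ + 1)), ⟨Finset.inter_subset_right, ?_⟩, ?_, ?_⟩
      · intro θ
        have : ((A.C (τ + 1) \ B.C (τ + 1)) \ (Cr ∩ (A.C (τ + 1) \ B.C (τ + 1)))) = ∅ := by
          rw [Finset.eq_empty_iff_forall_notMem]
          intro q hq
          rw [Finset.mem_sdiff, Finset.mem_inter] at hq
          exact hU ⟨q, Finset.mem_sdiff.2 ⟨(hd q hq.1).2, fun h => hq.2 ⟨h, hq.1⟩⟩⟩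
        rw [this]
        simp
      · intro q hq hq'
        exact Finset.mem_inter.2 ⟨hq, hq'⟩
      · rw [if_neg hpCr]
        exact (Finset.card_le_card Finset.inter_subset_left).trans (Nat.le_add_right _ _)

lemma step_all (A B : CacheRun S k T σ) (ω : ℕ → ℕ) (hB : IsBlindOracle B ω) (τ : ℕ)
    (hτ : τ + 1 ≤ T) (Cr : Finset S) (hV : Valid A B ω τ Cr) :
    ∃ Cr', Valid A B ω (τ + 1) Cr' ∧ StepRel A B τ Cr Cr' := by
  rcases run_cases B τ hτ with ⟨h1, h2⟩ | ⟨h0, h1, h2, h3⟩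
  · by_cases hm : σ (τ + 1) ∈ B.C τ
    · refine step_hit A B ω τ hτ Cr hV hm ?_
      rw [h2, Finset.insert_eq_of_mem hm]
    · have hlt := h1.resolve_left hm
      have heq : A.C τ = B.C τ := by
        rcases both_runs A B τ (by omega) with h | ⟨_, h⟩
        · exact h
        · omega
      have heq' : A.C (τ + 1) = B.C (τ + 1) := by
        rcases run_cases A τ hτ with ⟨_, h⟩ | ⟨_, h, _, _⟩
        · rw [h, h2, heq]
        · rw [heq] at h; omega
      have hCr : Cr = ∅ := by
        have := hV.1
        rw [heq, Finset.sdiff_self] at this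
        exact Finset.subset_empty.1 this
      refine ⟨∅, ⟨by simp, ?_⟩, ?_, ?_⟩
      · intro θ; rw [heq']; simp
      · intro q hq; rw [hCr] at hq; simp at hq
      · rw [hCr]; simp
  · exact step_miss A B ω hB τ hτ Cr hV h0 h1 h2 h3

lemma exists_credit (A B : CacheRun S k T σ) (ω : ℕ → ℕ) (hB : IsBlindOracle B ω) :
    ∃ Cr : ℕ → Finset S, Cr 0 = ∅ ∧ (∀ τ, τ ≤ T → Valid A B ω τ (Cr τ)) ∧
      ∀ τ, τ + 1 ≤ T → StepRel A B τ (Cr τ) (Cr (τ + 1)) := by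
  classical
  have hex : ∀ (τ : ℕ) (c : Finset S), ∃ c', τ + 1 ≤ T → Valid A B ω τ c →
      Valid A B ω (τ + 1) c' ∧ StepRel A B τ c c' := by
    intro τ c
    by_cases h : τ + 1 ≤ T ∧ Valid A B ω τ c
    · obtain ⟨c', hc'⟩ := step_all A B ω hB τ h.1 c h.2
      exact ⟨c', fun _ _ => hc'⟩
    · exact ⟨∅, fun h1 h2 => absurd ⟨h1, h2⟩ h⟩
  choose f hf using hex
  let Cr : ℕ → Finset S := fun n => Nat.rec ∅ (fun τ c => f τ c) n
  have hval : ∀ τ, τ ≤ T → Valid A B ω τ (Cr τ) := by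
    intro τ
    induction τ with
    | zero =>
      intro _
      refine ⟨by simp [Cr], ?_⟩
      intro θ
      rw [A.init, B.init]; simp
    | succ n ih =>
      intro h
      exact (hf n (Cr n) h (ih (by omega))).1
  exact ⟨Cr, rfl, hval, fun τ h => (hf τ (Cr τ) h (hval τ (by omega))).2⟩

lemma credit_count (A B : CacheRun S k T σ) (Cr : ℕ → Finset S) (h0 : Cr 0 = ∅)
    (hs : ∀ τ, τ + 1 ≤ T → StepRel A B τ (Cr τ) (Cr (τ + 1))) (τ : ℕ) (hτ : τ ≤ T) :
    (Cr τ).card + ((Finset.Icc 1 τ).filter fun s => σ s ∈ Cr (s - 1)).card ≤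
      ((Finset.Icc 1 τ).filter fun s => σ s ∉ A.C (s - 1) ∧ σ s ∈ B.C (s - 1)).card := by
  induction τ with
  | zero => simp [h0]
  | succ n ih =>
    have h1 := ih (by omega)
    have h2 := (hs n hτ).2
    rw [← Finset.insert_Icc_right_eq_Icc_add_one (by omega), Finset.filter_insert,
      Finset.filter_insert]
    have hn : ∀ P : ℕ → Prop, ∀ [DecidablePred P],
        (n + 1) ∉ (Finset.Icc 1 n).filter P := by
      intro P _; simp
    simp only [Nat.add_sub_cancel]
    split_ifs at h2 ⊢ <;> (try rw [Finset.card_insert_of_notMem (hn _)]) <;>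
      (try rw [Finset.card_insert_of_notMem (hn _)]) <;> omega

lemma fill_count (A : CacheRun S k T σ) (τ : ℕ) (hτ : τ ≤ T) :
    (A.C τ).card ≤
      ((Finset.Icc 1 τ).filter fun s => σ s ∉ A.C (s - 1) ∧ (A.C (s - 1)).card < k).card := by
  induction τ with
  | zero => simp [A.init]
  | succ n ih =>
    have h1 := ih (by omega)
    rw [← Finset.insert_Icc_right_eq_Icc_add_one (by omega), Finset.filter_insert]
    have hn : (n + 1) ∉ (Finset.Icc 1 n).filter
        (fun s => σ s ∉ A.C (s - 1) ∧ (A.C (s - 1)).card < k) := by simp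
    simp only [Nat.add_sub_cancel]
    have hk := A.card_le (n + 1)
    rcases run_cases A n hτ with ⟨h2, h3⟩ | ⟨h2, h3, h4, h5⟩
    · by_cases hm : σ (n + 1) ∈ A.C n
      · rw [if_neg (fun h => h.1 hm), h3, Finset.insert_eq_of_mem hm]
        exact h1
      · have := h2.resolve_left hm
        rw [if_pos ⟨hm, this⟩, Finset.card_insert_of_notMem hn, h3]
        exact (Finset.card_insert_le _ _).trans (by omega)
    · split_ifs <;> (try rw [Finset.card_insert_of_notMem hn]) <;> omega

end runs

section counting
variable {k T : ℕ} {σ : ℕ → S}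

lemma edge_facts (B : CacheRun S k T σ) (ω : ℕ → ℕ) (hB : IsBlindOracle B ω) (t j i : ℕ)
    (h1 : EvictsIdx B t j) (h2 : nextReq σ T j < nextReq σ T i) :
    1 ≤ j ∧ j < t ∧ t < nextReq σ T j ∧ nextReq σ T j ≤ T ∧ (B.C (t - 1)).card = k ∧
    (∀ τ, t ≤ τ → τ < nextReq σ T j → σ j ∉ B.C τ) ∧
    (∀ x ∈ lastIdx B (t - 1), t < nextReq σ T x ∧ ω x ≤ ω j ∧ 1 ≤ x ∧ x ≤ T) := by
  obtain ⟨⟨ht1, htT, hmiss, hfull⟩, hj, hp⟩ := h1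
  have hj' := hj
  rw [mem_lastIdx] at hj'
  obtain ⟨hjC, hjl, hj1⟩ := hj'
  have hjle : j ≤ t - 1 := by rw [hjl]; exact lst_le _ _ _
  have hνi := nu_le σ T i
  have key : ∀ x ∈ lastIdx B (t - 1), t < nextReq σ T x ∧ 1 ≤ x ∧ x ≤ T := by
    intro x hx
    rw [mem_lastIdx] at hx
    obtain ⟨hxC, hxl, hx1⟩ := hx
    have hxle : x ≤ t - 1 := by rw [hxl]; exact lst_le _ _ _
    have hν := nu_of_lst σ T (t - 1) x (by omega) hxl
    refine ⟨?_, hx1, by omega⟩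
    rcases Nat.lt_or_ge t (nextReq σ T x) with h | h
    · exact h
    · exfalso
      have he : nextReq σ T x = t := by omega
      have := nu_page σ T x (by omega)
      rw [he] at this
      exact hmiss (this ▸ hxC)
  refine ⟨hj1, by omega, (key j hj).1, by omega, hfull, ?_, ?_⟩
  · intro τ hτ1 hτ2
    apply run_not_mem B (σ j) t τ hτ1 (by omega)
    · have := B.evict t ht1 htT hmiss hfull
      rw [this, hp, Finset.mem_insert, Finset.mem_erase]
      rintro (h | h)
      · exact hmiss (h ▸ hjC)
      · exact h.1 rfl
    · intro l hl1 hl2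
      exact nu_between σ T j l (by omega) (by omega)
  · intro x hx
    obtain ⟨a, b, c⟩ := key x hx
    exact ⟨a, hB t ⟨ht1, htT, hmiss, hfull⟩ j hj hp x hx, b, c⟩

lemma edge_inj (B : CacheRun S k T σ) (ω : ℕ → ℕ) (hB : IsBlindOracle B ω)
    (H : EvictionGraph B) (e e' : ℕ × ℕ) (he : e ∈ H.E) (he' : e' ∈ H.E)
    (h : nextReq σ T e.2 = nextReq σ T e'.2) : e = e' := by
  obtain ⟨a1, a2, a3⟩ := H.mistake e he
  obtain ⟨b1, b2, b3⟩ := H.mistake e' he'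
  obtain ⟨c1, c2, c3, c4, c5, c6, c7⟩ := edge_facts B ω hB _ _ _ a1 a3
  obtain ⟨d1, d2, d3, d4, d5, d6, d7⟩ := edge_facts B ω hB _ _ _ b1 b3
  have hj : e.2 = e'.2 := nu_inj σ T _ _ c1 d1 (by omega) (by omega) h c4
  apply H.time_inj e he e' he'
  have m1 := ((mem_lastIdx B _ _).1 a1.2.1).1
  have m2 := ((mem_lastIdx B _ _).1 b1.2.1).1
  rcases lt_trichotomy (H.time e) (H.time e') with h1 | h1 | h1
  · exact absurd m2 (hj ▸ c6 (H.time e' - 1) (by omega) (by omega))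
  · exact h1
  · exact absurd m1 (hj ▸ d6 (H.time e - 1) (by omega) (by omega))

/-- Number of underpredicted indices active at `y`. -/
noncomputable def QQ (σ : ℕ → S) (T : ℕ) (ω : ℕ → ℕ) (y : ℕ) : ℕ :=
  ((Finset.Icc 1 T).filter fun x => ω x ≤ y ∧ y < nextReq σ T x).card

/-- Pages cached by `B` but not `A` at `τ`, requested within the next `K` steps. -/
noncomputable def FF (A B : CacheRun S k T σ) (K τ : ℕ) : ℕ :=
  ((Finset.Icc 1 T).filter fun x => (σ x ∈ B.C τ ∧ σ x ∉ A.C τ) ∧ x = lst σ τ (σ x) ∧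
    nextReq σ T x ≤ T ∧ nextReq σ T x ≤ τ + K).card

lemma sum_QQ (ω : ℕ → ℕ) (K : ℕ) :
    ∑ τ ∈ Finset.range (T + 1), QQ σ T ω (τ + K) ≤
      ∑ x ∈ Finset.Icc 1 T, (nextReq σ T x - ω x) := by
  simp only [QQ, Finset.card_filter]
  rw [Finset.sum_comm]
  apply Finset.sum_le_sum
  intro x _
  rw [← Finset.card_filter, ← Nat.card_Ico]
  apply Finset.card_le_card_of_injOn (fun τ => τ + K)
  · intro τ hτ
    have := (Finset.mem_filter.1 hτ).2
    exact Finset.mem_coe.2 (Finset.mem_Ico.2 this)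
  · intro a _ b _ h
    simpa using h

lemma sum_FF (A B : CacheRun S k T σ) (K : ℕ) :
    ∑ τ ∈ Finset.range (T + 1), FF A B K τ ≤
      K * ((Finset.Icc 1 T).filter
        fun s => σ s ∉ A.C (s - 1) ∧ (A.C (s - 1)).card = k).card := by
  set MF := (Finset.Icc 1 T).filter
        fun s => σ s ∉ A.C (s - 1) ∧ (A.C (s - 1)).card = k with hMF
  have h1 : ∀ τ ∈ Finset.range (T + 1),
      FF A B K τ ≤ (MF.filter fun r => τ < r ∧ r ≤ τ + K).card := by
    intro τ hτ
    rw [Finset.mem_range] at hτ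
    unfold FF
    apply Finset.card_le_card_of_injOn (fun x => nextReq σ T x)
    · intro x hx
      have hx' := Finset.mem_filter.1 hx
      obtain ⟨hxI, ⟨hxB, hxA⟩, hxl, hνT, hνK⟩ := hx'
      rw [Finset.mem_Icc] at hxI
      have hxle : x ≤ τ := by rw [hxl]; exact lst_le _ _ _
      have hν := nu_of_lst σ T τ x (by omega) hxl
      have hpg := nu_page σ T x hνT
      have hfull : (A.C τ).card = k := by
        rcases both_runs A B τ (by omega) with h | h
        · rw [h] at hxA; exact absurd hxB hxA
        · exact h.1
      have hm := run_card_mono' A τ (nextReq σ T x - 1) (by omega) (by omega)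
      have hm' := A.card_le (nextReq σ T x - 1)
      apply Finset.mem_coe.2
      show nextReq σ T x ∈ _
      rw [Finset.mem_filter, hMF, Finset.mem_filter, Finset.mem_Icc]
      refine ⟨⟨⟨by omega, hνT⟩, ?_, by omega⟩, hν, hνK⟩
      rw [hpg]
      exact run_not_mem A (σ x) τ _ (by omega) (by omega) hxA
        (fun l hl1 hl2 => nu_between σ T x l (by omega) (by omega))
    · intro x hx y hy h
      have hx' := Finset.mem_filter.1 hx
      have hy' := Finset.mem_filter.1 hy
      have ix := Finset.mem_Icc.1 hx'.1
      have iy := Finset.mem_Icc.1 hy'.1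
      exact nu_inj σ T x y ix.1 iy.1 ix.2 iy.2 h hx'.2.2.2.1
  refine (Finset.sum_le_sum h1).trans ?_
  simp only [Finset.card_filter]
  rw [Finset.sum_comm, mul_comm]
  apply Finset.sum_le_card_nsmul
  intro r _
  rw [← Finset.card_filter]
  have : (Finset.range (T + 1)).filter (fun τ => τ < r ∧ r ≤ τ + K) ⊆ Finset.Ico (r - K) r := by
    intro τ hτ
    rw [Finset.mem_filter] at hτ
    rw [Finset.mem_Ico]
    omega
  refine (Finset.card_le_card this).trans ?_
  rw [Nat.card_Ico]
  omega

/-- Number of cached indices that are underpredicted shortly after the reload. -/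
lemma QQ_lower (B : CacheRun S k T σ) (ω : ℕ → ℕ) (hB : IsBlindOracle B ω) (t j i y : ℕ)
    (h1 : EvictsIdx B t j) (h2 : nextReq σ T j < nextReq σ T i) (hy : ω j ≤ y) (hty : t ≤ y)
    (hyT : y ≤ T) :
    k ≤ QQ σ T ω y + (y - t) := by
  obtain ⟨c1, c2, c3, c4, c5, c6, c7⟩ := edge_facts B ω hB _ _ _ h1 h2
  have hc := card_lastIdx B (t - 1) (by omega)
  rw [c5] at hc
  refine hc.trans ?_
  rw [← Finset.card_filter_add_card_filter_not (s := lastIdx B (t - 1))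
    (p := fun x => y < nextReq σ T x)]
  apply Nat.add_le_add
  · apply Finset.card_le_card
    intro x hx
    rw [Finset.mem_filter] at hx
    obtain ⟨a, b, c, d⟩ := c7 x hx.1
    rw [Finset.mem_filter, Finset.mem_Icc]
    exact ⟨⟨c, d⟩, by omega, hx.2⟩
  · have : (Finset.Ioc t y).card = y - t := Nat.card_Ioc _ _
    rw [← this]
    apply Finset.card_le_card_of_injOn (fun x => nextReq σ T x)
    · intro x hx
      have hx' := Finset.mem_filter.1 hx
      obtain ⟨a, b, c, d⟩ := c7 x hx'.1
      apply Finset.mem_coe.2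
      show nextReq σ T x ∈ _
      rw [Finset.mem_Ioc]
      exact ⟨a, by omega⟩
    · intro x hx z hz h
      have hx' := Finset.mem_filter.1 hx
      have hz' := Finset.mem_filter.1 hz
      obtain ⟨a, b, c, d⟩ := c7 x hx'.1
      obtain ⟨a', b', c', d'⟩ := c7 z hz'.1
      exact nu_inj σ T x z c c' d d' h (by omega)

lemma credit_back (A B : CacheRun S k T σ) (Cr : ℕ → Finset S)
    (hs : ∀ τ, τ + 1 ≤ T → StepRel A B τ (Cr τ) (Cr (τ + 1))) (p : S) (t t' : ℕ)
    (h : t ≤ t') (h' : t' ≤ T) (hAB : ∀ τ, t ≤ τ → τ ≤ t' → p ∈ A.C τ \ B.C τ)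
    (hp : p ∉ Cr t') : p ∉ Cr t := by
  induction t', h using Nat.le_induction with
  | base => exact hp
  | succ n hn ih =>
    apply ih (by omega) (fun τ h1 h2 => hAB τ h1 (by omega))
    intro hc
    exact hp ((hs n h').1 p hc (hAB (n + 1) (by omega) le_rfl))

lemma active_bound (A B : CacheRun S k T σ) (ω : ℕ → ℕ) (hB : IsBlindOracle B ω)
    (H : EvictionGraph B) (Cr : ℕ → Finset S) (hV : ∀ τ, τ ≤ T → Valid A B ω τ (Cr τ))
    (hs : ∀ τ, τ + 1 ≤ T → StepRel A B τ (Cr τ) (Cr (τ + 1))) (K τ : ℕ) (hτ : τ + K ≤ T)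
    (Act : Finset (ℕ × ℕ))
    (hAct : ∀ e ∈ Act, e ∈ H.E ∧ σ (nextReq σ T e.2) ∈ A.C (nextReq σ T e.2 - 1) ∧
      σ (nextReq σ T e.2) ∉ Cr (nextReq σ T e.2 - 1) ∧ H.time e ≤ τ ∧ τ < nextReq σ T e.2 ∧
      ω e.2 ≤ τ + K) :
    Act.card ≤ QQ σ T ω (τ + K) + FF A B K τ := by
  have h1 : Act.card ≤
      (((A.C τ \ B.C τ) \ Cr τ).filter fun p => ω (lst σ τ p) ≤ τ + K).card := by
    have hfact : ∀ e ∈ Act, lst σ τ (σ e.2) = e.2 := by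
      intro e he
      obtain ⟨a1, a2, a3, a4, a5, a6⟩ := hAct e he
      obtain ⟨b1, b2, b3⟩ := H.mistake e a1
      obtain ⟨c1, c2, c3, c4, c5, c6, c7⟩ := edge_facts B ω hB _ _ _ b1 b3
      exact lst_of_nu σ T τ e.2 c1 (by omega) a5
    apply Finset.card_le_card_of_injOn (fun e => σ e.2)
    · intro e he
      have hl := hfact e he
      obtain ⟨a1, a2, a3, a4, a5, a6⟩ := hAct e he
      obtain ⟨b1, b2, b3⟩ := H.mistake e a1
      obtain ⟨c1, c2, c3, c4, c5, c6, c7⟩ := edge_facts B ω hB _ _ _ b1 b3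
      have hpg := nu_page σ T e.2 c4
      rw [hpg] at a2 a3
      have hA : ∀ l, H.time e ≤ l → l ≤ nextReq σ T e.2 - 1 → σ e.2 ∈ A.C l \ B.C l := by
        intro l hl1 hl2
        rw [Finset.mem_sdiff]
        refine ⟨?_, c6 l hl1 (by omega)⟩
        by_contra hc
        exact run_not_mem A (σ e.2) l _ hl2 (by omega) hc
          (fun l' h1 h2 => nu_between σ T e.2 l' (by omega) (by omega)) a2
      apply Finset.mem_coe.2
      rw [Finset.mem_filter, Finset.mem_sdiff]
      refine ⟨⟨hA τ a4 (by omega), ?_⟩, by rw [hl]; exact a6⟩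
      exact credit_back A B Cr hs (σ e.2) τ (nextReq σ T e.2 - 1) (by omega) (by omega)
        (fun l h1 h2 => hA l (by omega) h2) a3
    · intro e he e' he' h
      have h1 := hfact e he
      have h2 := hfact e' he'
      have h3 : e.2 = e'.2 := by
        rw [← h1, ← h2]
        exact congrArg _ h
      exact edge_inj B ω hB H e e' (hAct e he).1 (hAct e' he').1 (by rw [h3])
  refine h1.trans (((hV τ (by omega)).2 (τ + K)).trans ?_)
  rw [← Finset.card_filter_add_card_filter_not
    (s := (B.C τ \ A.C τ).filter fun p => ω (lst σ τ p) ≤ τ + K)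
    (p := fun p => τ + K < nextReq σ T (lst σ τ p))]
  have hinj : ∀ p ∈ B.C τ, ∀ q ∈ B.C τ, lst σ τ p = lst σ τ q → p = q := by
    intro p hp q hq h
    rw [← lst_page σ τ p (run_seen B τ (by omega) p hp),
      ← lst_page σ τ q (run_seen B τ (by omega) q hq), h]
  apply Nat.add_le_add
  · apply Finset.card_le_card_of_injOn (lst σ τ)
    · intro p hp
      have hp' := Finset.mem_filter.1 hp
      have hp2 := Finset.mem_filter.1 hp'.1
      have hp3 := Finset.mem_sdiff.1 hp2.1
      have := run_seen B τ (by omega) p hp3.1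
      have h4 := lst_le σ τ p
      apply Finset.mem_coe.2
      rw [Finset.mem_filter, Finset.mem_Icc]
      exact ⟨⟨this, by omega⟩, hp2.2, hp'.2⟩
    · intro p hp q hq h
      refine hinj p ?_ q ?_ h
      · exact (Finset.mem_sdiff.1 (Finset.mem_filter.1 (Finset.mem_filter.1 hp).1).1).1
      · exact (Finset.mem_sdiff.1 (Finset.mem_filter.1 (Finset.mem_filter.1 hq).1).1).1
  · apply Finset.card_le_card_of_injOn (lst σ τ)
    · intro p hp
      have hp' := Finset.mem_filter.1 hp
      have hp2 := Finset.mem_filter.1 hp'.1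
      have hp3 := Finset.mem_sdiff.1 hp2.1
      have h5 := run_seen B τ (by omega) p hp3.1
      have h4 := lst_le σ τ p
      have hn := hp'.2
      apply Finset.mem_coe.2
      rw [Finset.mem_filter, Finset.mem_Icc, lst_page σ τ p h5]
      exact ⟨⟨h5, by omega⟩, hp3, rfl, by omega, by omega⟩
    · intro p hp q hq h
      refine hinj p ?_ q ?_ h
      · exact (Finset.mem_sdiff.1 (Finset.mem_filter.1 (Finset.mem_filter.1 hp).1).1).1
      · exact (Finset.mem_sdiff.1 (Finset.mem_filter.1 (Finset.mem_filter.1 hq).1).1).1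

/-- Loss bound for the uncredited edges that `A` hits. -/
lemma loss_bound (A B : CacheRun S k T σ) (ω : ℕ → ℕ) (hB : IsBlindOracle B ω)
    (H : EvictionGraph B) (Cr : ℕ → Finset S) (hV : ∀ τ, τ ≤ T → Valid A B ω τ (Cr τ))
    (hs : ∀ τ, τ + 1 ≤ T → StepRel A B τ (Cr τ) (Cr (τ + 1))) (K : ℕ) (hK : 3 * K ≤ k + 2)
    (E3 : Finset (ℕ × ℕ))
    (hE3 : ∀ e ∈ E3, e ∈ H.E ∧ nextReq σ T e.2 + K ≤ T + 1 ∧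
      σ (nextReq σ T e.2) ∈ A.C (nextReq σ T e.2 - 1) ∧
      σ (nextReq σ T e.2) ∉ Cr (nextReq σ T e.2 - 1)) :
    K * E3.card ≤ totalLoss σ T ω + K * ((Finset.Icc 1 T).filter
        fun s => σ s ∉ A.C (s - 1) ∧ (A.C (s - 1)).card = k).card := by
  set ν : ℕ × ℕ → ℕ := fun e => nextReq σ T e.2 with hν
  set ρ : ℕ × ℕ → ℕ := fun e => ω e.2 - ν e with hρ
  set lam : ℕ × ℕ → ℕ := fun e => ν e - H.time e with hlam
  have hf : ∀ e ∈ E3, 1 ≤ e.2 ∧ e.2 < H.time e ∧ H.time e < ν e ∧ ν e ≤ T := by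
    intro e he
    obtain ⟨b1, b2, b3⟩ := H.mistake e (hE3 e he).1
    obtain ⟨c1, c2, c3, c4, c5, c6, c7⟩ := edge_facts B ω hB _ _ _ b1 b3
    exact ⟨c1, c2, c3, c4⟩
  have hinj : ∀ e ∈ E3, ∀ e' ∈ E3, ν e = ν e' → e = e' := fun e he e' he' h =>
    edge_inj B ω hB H e e' (hE3 e he).1 (hE3 e' he').1 h
  -- per edge decomposition
  have hdec : ∀ e ∈ E3, K ≤ ρ e + ∑ τ ∈ Finset.range (T + 1),
      ((if τ < ν e ∧ ν e ≤ τ + min (lam e) (K - ρ e) then 1 else 0) +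
        (if ν e = τ + 2 then K - ρ e - lam e else 0)) := by
    intro e he
    obtain ⟨f1, f2, f3, f4⟩ := hf e he
    rw [Finset.sum_add_distrib, ← Finset.card_filter]
    have hc : min (lam e) (K - ρ e) ≤ ((Finset.range (T + 1)).filter
        fun τ => τ < ν e ∧ ν e ≤ τ + min (lam e) (K - ρ e)).card := by
      have : (Finset.Ico (ν e - min (lam e) (K - ρ e)) (ν e)).card =
          min (lam e) (K - ρ e) := by
        rw [Nat.card_Ico]
        have : min (lam e) (K - ρ e) ≤ lam e := min_le_left _ _
        have : lam e ≤ ν e := Nat.sub_le _ _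
        omega
      rw [← this]
      apply Finset.card_le_card
      intro τ hτ
      rw [this]
      rw [Finset.mem_Ico] at hτ
      rw [Finset.mem_filter, Finset.mem_range]
      omega
    have hb : K - ρ e - lam e ≤
        ∑ τ ∈ Finset.range (T + 1), (if ν e = τ + 2 then K - ρ e - lam e else 0) := by
      refine le_trans ?_ (Finset.single_le_sum (f := fun τ =>
        (if ν e = τ + 2 then K - ρ e - lam e else 0)) (fun _ _ => Nat.zero_le _)
        (Finset.mem_range.2 (by omega : ν e - 2 < T + 1)))
      rw [if_pos (by omega)]
    have := min_def (lam e) (K - ρ e)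
    split_ifs at this <;> omega
  -- per time bound
  have htime : ∀ τ ∈ Finset.range (T + 1),
      ∑ e ∈ E3, ((if τ < ν e ∧ ν e ≤ τ + min (lam e) (K - ρ e) then 1 else 0) +
        (if ν e = τ + 2 then K - ρ e - lam e else 0)) ≤
      QQ σ T ω (τ + K) + FF A B K τ := by
    intro τ hτ
    rw [Finset.mem_range] at hτ
    rw [Finset.sum_add_distrib, ← Finset.card_filter]
    set Act := E3.filter fun e => τ < ν e ∧ ν e ≤ τ + min (lam e) (K - ρ e) with hAct
    by_cases hb : ∃ e ∈ E3, ν e = τ + 2 ∧ 0 < K - ρ e - lam e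
    · obtain ⟨e, he, hνe, hbe⟩ := hb
      obtain ⟨f1, f2, f3, f4⟩ := hf e he
      obtain ⟨g1, g2, g3, g4⟩ := hE3 e he
      obtain ⟨b1, b2, b3⟩ := H.mistake e g1
      have hsum : ∑ e ∈ E3, (if ν e = τ + 2 then K - ρ e - lam e else 0) =
          K - ρ e - lam e := by
        rw [Finset.sum_eq_single e]
        · rw [if_pos hνe]
        · intro e' he' hne
          rw [if_neg]
          intro h
          exact hne (hinj e' he' e he (by omega))
        · intro h; exact absurd he h
      have hact : Act.card ≤ K := by
        have : (Finset.Ioc τ (τ + K)).card = K := by rw [Nat.card_Ioc]; omega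
        rw [← this]
        apply Finset.card_le_card_of_injOn ν
        · intro e' he'
          have h' := (Finset.mem_filter.1 he').2
          have := min_le_right (lam e') (K - ρ e')
          apply Finset.mem_coe.2
          rw [Finset.mem_Ioc]
          omega
        · intro a ha b hb' h
          exact hinj a (Finset.mem_filter.1 ha).1 b (Finset.mem_filter.1 hb').1 h
      have hρe : ρ e = ω e.2 - ν e := rfl
      have hle : lam e = ν e - H.time e := rfl
      have hνe' : ν e = nextReq σ T e.2 := rfl
      have hq := QQ_lower B ω hB (H.time e) e.2 e.1 (τ + K) b1 b3 (by omega) (by omega)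
        (by omega)
      rw [hsum]
      omega
    · have hsum : ∑ e ∈ E3, (if ν e = τ + 2 then K - ρ e - lam e else 0) = 0 := by
        apply Finset.sum_eq_zero
        intro e he
        split_ifs with h
        · by_contra hc
          exact hb ⟨e, he, h, by omega⟩
        · rfl
      rw [hsum, add_zero]
      rcases Act.eq_empty_or_nonempty with h0 | ⟨e0, he0⟩
      · rw [h0]; simp
      · have hT : τ + K ≤ T := by
          have h' := Finset.mem_filter.1 he0
          have := (hE3 e0 h'.1).2.1
          have h2 := h'.2.1
          have hνe' : ν e0 = nextReq σ T e0.2 := rfl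
          omega
        apply active_bound A B ω hB H Cr hV hs K τ hT Act
        intro e he
        have h' := Finset.mem_filter.1 he
        obtain ⟨g1, g2, g3, g4⟩ := hE3 e h'.1
        obtain ⟨f1, f2, f3, f4⟩ := hf e h'.1
        have m1 := min_le_left (lam e) (K - ρ e)
        have m2 := min_le_right (lam e) (K - ρ e)
        have hρe : ρ e = ω e.2 - ν e := rfl
        have hle : lam e = ν e - H.time e := rfl
        have hνe' : ν e = nextReq σ T e.2 := rfl
        refine ⟨g1, g3, g4, ?_, h'.2.1, ?_⟩ <;> omega
  have hover : ∑ e ∈ E3, ρ e ≤ ∑ x ∈ Finset.Icc 1 T, (ω x - nextReq σ T x) := by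
    have hij : Set.InjOn (fun e : ℕ × ℕ => e.2) (E3 : Set (ℕ × ℕ)) := by
      intro a ha b hb h
      refine hinj a ha b hb ?_
      simp only [hν]
      rw [show a.2 = b.2 from h]
    have : ∑ e ∈ E3, ρ e = ∑ x ∈ E3.image (fun e => e.2), (ω x - nextReq σ T x) := by
      rw [Finset.sum_image hij]
    rw [this]
    apply Finset.sum_le_sum_of_subset
    intro x hx
    obtain ⟨e, he, rfl⟩ := Finset.mem_image.1 hx
    obtain ⟨f1, f2, f3, f4⟩ := hf e he
    rw [Finset.mem_Icc]
    omega
  have hloss : totalLoss σ T ω = ∑ x ∈ Finset.Icc 1 T, (nextReq σ T x - ω x) +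
      ∑ x ∈ Finset.Icc 1 T, (ω x - nextReq σ T x) := by
    unfold totalLoss
    rw [← Finset.sum_add_distrib]
    rfl
  have h1 : K * E3.card ≤ ∑ e ∈ E3, (ρ e + ∑ τ ∈ Finset.range (T + 1),
      ((if τ < ν e ∧ ν e ≤ τ + min (lam e) (K - ρ e) then 1 else 0) +
        (if ν e = τ + 2 then K - ρ e - lam e else 0))) := by
    rw [mul_comm]
    exact Finset.card_nsmul_le_sum _ _ _ hdec
  rw [Finset.sum_add_distrib, Finset.sum_comm] at h1
  have h2 := Finset.sum_le_sum htime
  rw [Finset.sum_add_distrib] at h2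
  have h3 := sum_QQ (σ := σ) (T := T) ω K
  have h4 := sum_FF A B K
  omega

lemma nat_bound (hk : 1 ≤ k) (A B : CacheRun S k T σ) (ω : ℕ → ℕ) (hB : IsBlindOracle B ω)
    (H : EvictionGraph B) (K : ℕ) (hK : 3 * K ≤ k + 2) :
    K * H.E.card ≤ totalLoss σ T ω + 2 * K * misses A := by
  obtain ⟨Cr, hC0, hV, hs⟩ := exists_credit A B ω hB
  rcases H.E.eq_empty_or_nonempty with hE | ⟨e0, he0⟩
  · rw [hE]; simp
  set ν : ℕ × ℕ → ℕ := fun e => nextReq σ T e.2 with hν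
  have hf : ∀ e ∈ H.E, H.time e < ν e ∧ ν e ≤ T ∧ 1 ≤ H.time e ∧
      (B.C (H.time e - 1)).card = k ∧ σ (ν e) ∉ B.C (ν e - 1) := by
    intro e he
    obtain ⟨b1, b2, b3⟩ := H.mistake e he
    obtain ⟨c1, c2, c3, c4, c5, c6, c7⟩ := edge_facts B ω hB _ _ _ b1 b3
    refine ⟨c3, c4, by omega, c5, ?_⟩
    have := nu_page σ T e.2 c4
    simp only [hν]
    rw [this]
    exact c6 _ (by omega) (by omega)
  have hinj : ∀ e ∈ H.E, ∀ e' ∈ H.E, ν e = ν e' → e = e' := fun e he e' he' h =>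
    edge_inj B ω hB H e e' he he' h
  set MF := (Finset.Icc 1 T).filter
        fun s => σ s ∉ A.C (s - 1) ∧ (A.C (s - 1)).card = k with hMF
  set M1 := MF.filter fun s => σ s ∉ B.C (s - 1) with hM1
  set M2 := MF.filter fun s => ¬ σ s ∉ B.C (s - 1) with hM2
  have hM12 : M1.card + M2.card = MF.card := Finset.card_filter_add_card_filter_not _
  set E0 := H.E.filter fun e => ¬ (ν e + K ≤ T + 1) with hE0
  set E1 := H.E.filter fun e => σ (ν e) ∉ A.C (ν e - 1) with hE1
  set E2 := H.E.filter fun e => σ (ν e) ∈ Cr (ν e - 1) with hE2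
  set E3 := H.E.filter fun e => ν e + K ≤ T + 1 ∧ σ (ν e) ∈ A.C (ν e - 1) ∧
    σ (ν e) ∉ Cr (ν e - 1) with hE3
  have hcov : H.E.card ≤ E0.card + E1.card + E2.card + E3.card := by
    have : H.E ⊆ ((E0 ∪ E1) ∪ E2) ∪ E3 := by
      intro e he
      simp only [hE0, hE1, hE2, hE3, Finset.mem_union, Finset.mem_filter]
      tauto
    refine (Finset.card_le_card this).trans ?_
    have u1 := Finset.card_union_le ((E0 ∪ E1) ∪ E2) E3
    have u2 := Finset.card_union_le (E0 ∪ E1) E2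
    have u3 := Finset.card_union_le E0 E1
    omega
  have c0 : E0.card ≤ K := by
    have : (Finset.Ioc (T + 1 - K) T).card ≤ K := by rw [Nat.card_Ioc]; omega
    refine le_trans ?_ this
    apply Finset.card_le_card_of_injOn ν
    · intro e he
      have h' := Finset.mem_filter.1 he
      have := hf e h'.1
      apply Finset.mem_coe.2
      rw [Finset.mem_Ioc]
      omega
    · intro a ha b hb h
      exact hinj a (Finset.mem_filter.1 ha).1 b (Finset.mem_filter.1 hb).1 h
  have c1 : E1.card ≤ M1.card := by
    apply Finset.card_le_card_of_injOn ν
    · intro e he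
      have h' := Finset.mem_filter.1 he
      obtain ⟨f1, f2, f3, f4, f5⟩ := hf e h'.1
      have hm := run_card_mono' B (H.time e - 1) (ν e - 1) (by omega) (by omega)
      have hm' := B.card_le (ν e - 1)
      have hAf : (A.C (ν e - 1)).card = k := by
        rcases both_runs A B (ν e - 1) (by omega) with h | h
        · rw [h]; omega
        · exact h.1
      apply Finset.mem_coe.2
      rw [hM1, Finset.mem_filter, hMF, Finset.mem_filter, Finset.mem_Icc]
      exact ⟨⟨⟨by omega, f2⟩, h'.2, hAf⟩, f5⟩
    · intro a ha b hb h
      exact hinj a (Finset.mem_filter.1 ha).1 b (Finset.mem_filter.1 hb).1 h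
  have c2 : E2.card ≤ M2.card := by
    have q1 := credit_count A B Cr hC0 hs T le_rfl
    have q2 : E2.card ≤ ((Finset.Icc 1 T).filter fun s => σ s ∈ Cr (s - 1)).card := by
      apply Finset.card_le_card_of_injOn ν
      · intro e he
        have h' := Finset.mem_filter.1 he
        obtain ⟨f1, f2, f3, f4, f5⟩ := hf e h'.1
        apply Finset.mem_coe.2
        rw [Finset.mem_filter, Finset.mem_Icc]
        exact ⟨⟨by omega, f2⟩, h'.2⟩
      · intro a ha b hb h
        exact hinj a (Finset.mem_filter.1 ha).1 b (Finset.mem_filter.1 hb).1 h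
    have q3 : ((Finset.Icc 1 T).filter
        fun s => σ s ∉ A.C (s - 1) ∧ σ s ∈ B.C (s - 1)).card ≤ M2.card := by
      apply Finset.card_le_card
      intro s hs'
      rw [Finset.mem_filter] at hs'
      obtain ⟨r1, r2, r3⟩ := hs'
      have r1' := Finset.mem_Icc.1 r1
      rw [hM2, Finset.mem_filter, hMF, Finset.mem_filter]
      refine ⟨⟨r1, r2, ?_⟩, fun h => h r3⟩
      rcases both_runs A B (s - 1) (by omega) with h | h
      · rw [h] at r2; exact absurd r3 r2
      · exact h.1
    omega
  have c3 : K * E3.card ≤ totalLoss σ T ω + K * MF.card := by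
    apply loss_bound A B ω hB H Cr hV hs K hK E3
    intro e he
    have h' := Finset.mem_filter.1 he
    exact ⟨h'.1, h'.2⟩
  have c4 : MF.card + k ≤ misses A := by
    obtain ⟨f1, f2, f3, f4, f5⟩ := hf e0 he0
    have hAf : (A.C (H.time e0 - 1)).card = k := by
      rcases both_runs A B (H.time e0 - 1) (by omega) with h | h
      · rw [h]; exact f4
      · exact h.1
    have hm := run_card_mono' A (H.time e0 - 1) T (by omega) le_rfl
    have hfill := fill_count A T le_rfl
    have hdis : Disjoint MF ((Finset.Icc 1 T).filter
        fun s => σ s ∉ A.C (s - 1) ∧ (A.C (s - 1)).card < k) := by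
      rw [Finset.disjoint_left]
      intro s h1 h2
      have h1' := (Finset.mem_filter.1 h1).2.2
      have h2' := (Finset.mem_filter.1 h2).2.2
      omega
    have hu := Finset.card_union_of_disjoint hdis
    have hsub : (MF ∪ ((Finset.Icc 1 T).filter
        fun s => σ s ∉ A.C (s - 1) ∧ (A.C (s - 1)).card < k)).card ≤ misses A := by
      unfold misses
      apply Finset.card_le_card
      intro s hs'
      rcases Finset.mem_union.1 hs' with h | h
      · have := Finset.mem_filter.1 h
        exact Finset.mem_filter.2 ⟨this.1, this.2.1⟩
      · have := Finset.mem_filter.1 h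
        exact Finset.mem_filter.2 ⟨this.1, this.2.1⟩
    omega
  have hKk : K ≤ k := by omega
  have s1 : K * H.E.card ≤ K * (E0.card + E1.card + E2.card) + K * E3.card := by
    rw [← mul_add]; exact Nat.mul_le_mul_left _ hcov
  have s2 : K * (E0.card + E1.card + E2.card) + K * MF.card ≤ 2 * K * misses A := by
    rw [← mul_add, mul_comm 2 K, mul_assoc]
    apply Nat.mul_le_mul_left
    omega
  omega

end counting

/-- For any colored eviction graph of a run of BlindOracle in which
same-colored edges share their source, evictions at same-colored edges do not overlap,
and at most `OPT` colors are used, the number of edges is at most `3η/k + 2·OPT`. -/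
theorem stmt9 {S : Type} [DecidableEq S] (k T : ℕ) (hk : 1 ≤ k) (σ : ℕ → S) (ω : ℕ → ℕ)
    (B A : CacheRun S k T σ) (hB : IsBlindOracle B ω) (hA : IsBelady A)
    (H : EvictionGraph B) (col : ℕ × ℕ → ℕ) (n : ℕ)
    (hcol : ∀ e ∈ H.E, col e < n)
    (hsrc : ∀ e ∈ H.E, ∀ e' ∈ H.E, col e = col e' → e.1 = e'.1)
    (hover : ∀ e ∈ H.E, ∀ e' ∈ H.E, col e = col e' → H.time e < H.time e' →
        ∃ t', t' ≤ H.time e' ∧ Triggers B (H.time e) t')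
    (hn : n ≤ misses A) :
    (H.E.card : ℝ) ≤ 3 * totalLoss σ T ω / k + 2 * misses A := by
  set K := (k + 2) / 3 with hKdef
  have hK1 : 3 * K ≤ k + 2 := by omega
  have hK2 : k ≤ 3 * K := by omega
  have h := nat_bound hk A B ω hB H K hK1
  have hR : (K : ℝ) * H.E.card ≤ totalLoss σ T ω + 2 * K * misses A := by exact_mod_cast h
  have hkR : (0 : ℝ) < k := by exact_mod_cast hk
  have hK2R : (k : ℝ) ≤ 3 * K := by exact_mod_cast hK2
  have hKpos : (0 : ℝ) < K := by linarith
  have hL : (0 : ℝ) ≤ totalLoss σ T ω := Nat.cast_nonneg _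
  have h1 : (H.E.card : ℝ) ≤ totalLoss σ T ω / K + 2 * misses A := by
    rw [div_add' _ _ _ hKpos.ne', le_div_iff₀ hKpos]
    linarith
  have h2 : (totalLoss σ T ω : ℝ) / K ≤ 3 * totalLoss σ T ω / k := by
    rw [div_le_div_iff₀ hKpos hkR]
    nlinarith
  linarith

end Caching
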